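/- arXiv:2109.01795 — 2 statements merged into one kernel-verified Lean document; each statement's English description precedes it below -/
import Mathlib

section
/- Let π₁, π₂ be strategy profiles of a finite discounted stochastic game with ‖π₁ − π₂‖∞ ≤ δ. Then for every agent i and every state s, |V^{π₁^i,π₁^{-i}}(s) − V^{π₂^i,π₂^{-i}}(s)| ≤ 2nS²A_max R_max δ/(1−γ)². -/
/-!
The value functions `Vₖ = (1 - γ Pₖ)⁻¹ rₖ` of the two profiles satisfy the resolvent identity
`V₁ - V₂ = (1 - γ P₁)⁻¹ (r₁ - r₂ + γ (P₁ - P₂) V₂)`.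
In the `ℓ^∞` operator norm `(1 - γ P₁)⁻¹` has norm at most `(1 - γ)⁻¹`, so it remains to compare the
rewards and the transition matrices. They factor as `rₖ = Πₖ r` and `Pₖ = Πₖ P`, where row `s` of
`Πₖ` is the joint action distribution at `s`, so `‖Π₁ - Π₂‖` is the largest `ℓ¹` distance between
the joint action distributions at a state. The outer product is multilinear of norm one on `ℓ¹`, so
this distance is at most the sum `ε` of the `ℓ¹` distances of the individual strategies. Altogether
`|V₁ - V₂| ≤ (ε R_max + γ ε R_max / (1 - γ)) / (1 - γ) = R_max ε / (1 - γ)²`.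
-/

open Finset

/-- A finite discounted stochastic game with `n` agents, `S` states and
action counts `A i` for each agent `i`. -/
structure SG (n S : ℕ) (A : Fin n → ℕ) where
  P : Fin S → (∀ i, Fin (A i)) → Fin S → ℝ
  r : Fin n → Fin S → (∀ i, Fin (A i)) → ℝ
  Rmax : ℝ
  γ : ℝ
  P_nonneg : ∀ s a s', 0 ≤ P s a s'
  P_sum_one : ∀ s a, ∑ s', P s a s' = 1
  r_nonneg : ∀ i s a, 0 ≤ r i s a
  r_le_Rmax : ∀ i s a, r i s a ≤ Rmax
  γ_nonneg : 0 ≤ γ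
  γ_lt_one : γ < 1

namespace SG

variable {n S : ℕ} {A : Fin n → ℕ}

/-- A (behavioral) strategy profile: agent `i` plays at state `s` the distribution
`π i s` on its actions. -/
abbrev Profile (n S : ℕ) (A : Fin n → ℕ) := ∀ i : Fin n, Fin S → Fin (A i) → ℝ

/-- `π` is a genuine strategy profile: each `π i s` is a probability distribution. -/
def IsProfile (π : Profile n S A) : Prop :=
  (∀ i s a, 0 ≤ π i s a) ∧ ∀ i s, ∑ a, π i s a = 1

/-- `A_max`, the largest number of actions of any agent. -/
def Amax (A : Fin n → ℕ) : ℕ := Finset.univ.sup A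

/-- Probability of the joint action `a` at state `s` under profile `π`. -/
def jointProb (π : Profile n S A) (s : Fin S) (a : ∀ i, Fin (A i)) : ℝ :=
  ∏ i, π i s (a i)

/-- The state-transition matrix `P^π` induced by the profile `π`. -/
noncomputable def Pmat (g : SG n S A) (π : Profile n S A) : Matrix (Fin S) (Fin S) ℝ :=
  fun s s' => ∑ a, jointProb π s a * g.P s a s'

/-- Expected one-step reward `r^{i,π}(s)` of agent `i` at state `s` under `π`. -/
noncomputable def rvec (g : SG n S A) (π : Profile n S A) (i : Fin n) (s : Fin S) : ℝ :=
  ∑ a, jointProb π s a * g.r i s a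

/-- The value function `V^{π^i,π^{-i}}` of agent `i` under profile `π`: the unique
solution of the Bellman equation `V = r^{i,π} + γ P^π V`, i.e. `(I − γP^π)⁻¹ r^{i,π}`. -/
noncomputable def V (g : SG n S A) (π : Profile n S A) (i : Fin n) : Fin S → ℝ :=
  Matrix.mulVec (1 - g.γ • g.Pmat π)⁻¹ (g.rvec π i)

/-- The profile obtained from `π` by letting agent `i` play the pure action `a`
at state `s` (and `π i` at every other state). -/
def devProfile (π : Profile n S A) (i : Fin n) (s : Fin S) (a : Fin (A i)) : Profile n S A :=
  Function.update π i (fun t b => if t = s then (if b = a then (1 : ℝ) else 0) else π i t b)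

/-- The one-step-deviation value `V^{π^i,π^{-i}}_{π^i(s,a)=1}(s)`. -/
noncomputable def Vdev (g : SG n S A) (π : Profile n S A) (i : Fin n) (s : Fin S)
    (a : Fin (A i)) : ℝ :=
  g.V (devProfile π i s a) i s

/-- `D^{π}_{a}(s) = max(0, V^{π^i,π^{-i}}_{π^i(s,a)=1}(s) − V^{π^i,π^{-i}}(s))`. -/
noncomputable def D (g : SG n S A) (π : Profile n S A) (i : Fin n) (s : Fin S)
    (a : Fin (A i)) : ℝ :=
  max 0 (g.Vdev π i s a - g.V π i s)

/-- Nash's improvement map `f` on strategy profiles. -/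
noncomputable def f (g : SG n S A) (π : Profile n S A) : Profile n S A :=
  fun i s a => (π i s a + g.D π i s a) / (1 + ∑ b, g.D π i s b)

/-- `π` is a Markov perfect equilibrium: no agent can improve its value at any state
by unilaterally switching to another behavioral strategy. -/
def IsMPE (g : SG n S A) (π : Profile n S A) : Prop :=
  ∀ (s : Fin S) (i : Fin n) (σ : Fin S → Fin (A i) → ℝ),
    ((∀ t b, 0 ≤ σ t b) ∧ ∀ t, ∑ b, σ t b = 1) →
    g.V (Function.update π i σ) i s ≤ g.V π i s

/-- `π` is an `ε`-approximate Markov perfect equilibrium. -/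
def IsApproxMPE (g : SG n S A) (π : Profile n S A) (ε : ℝ) : Prop :=
  ∀ (s : Fin S) (i : Fin n) (σ : Fin S → Fin (A i) → ℝ),
    ((∀ t b, 0 ≤ σ t b) ∧ ∀ t, ∑ b, σ t b = 1) →
    g.V (Function.update π i σ) i s - ε ≤ g.V π i s

end SG

section OuterProduct

variable {𝕜 ι : Type*} [NontriviallyNormedField 𝕜] [Fintype ι]
  {α : ι → Type*} [∀ i, Fintype (α i)]

/-- The outer product `(p i)ᵢ ↦ (a ↦ ∏ i, p i (a i))` as a multilinear map between `ℓ¹` spaces. It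
sends probability vectors to the distribution of independent draws. -/
noncomputable def l1OuterProduct (𝕜 : Type*) [NontriviallyNormedField 𝕜] (α : ι → Type*)
    [∀ i, Fintype (α i)] :
    MultilinearMap 𝕜 (fun i => PiLp 1 fun _ : α i => 𝕜) (PiLp 1 fun _ : (∀ i, α i) => 𝕜) :=
  (WithLp.linearEquiv 1 𝕜 ((∀ i, α i) → 𝕜)).symm.toLinearMap.compMultilinearMap <|
    MultilinearMap.pi fun a =>
      (MultilinearMap.mkPiAlgebra 𝕜 ι 𝕜).compLinearMap fun i => PiLp.projₗ 1 (fun _ => 𝕜) (a i)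

theorem l1OuterProduct_apply (p : ∀ i, PiLp 1 fun _ : α i => 𝕜) (a : ∀ i, α i) :
    l1OuterProduct 𝕜 α p a = ∏ i, p i (a i) := by
  simp [l1OuterProduct]

variable [DecidableEq ι]

theorem norm_l1OuterProduct (p : ∀ i, PiLp 1 fun _ : α i => 𝕜) :
    ‖l1OuterProduct 𝕜 α p‖ = ∏ i, ‖p i‖ := by
  simp only [PiLp.norm_eq_of_L1, l1OuterProduct_apply, norm_prod, Fintype.prod_sum]

theorem norm_l1OuterProduct_sub_le {p q : ∀ i, PiLp 1 fun _ : α i => 𝕜}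
    (hp : ∀ i, ‖p i‖ ≤ 1) (hq : ∀ i, ‖q i‖ ≤ 1) :
    ‖l1OuterProduct 𝕜 α p - l1OuterProduct 𝕜 α q‖ ≤ ∑ i, ‖p i - q i‖ := by
  have hbound : ∀ m, ‖l1OuterProduct 𝕜 α m‖ ≤ 1 * ∏ i, ‖m i‖ := fun m => by
    rw [one_mul, norm_l1OuterProduct]
  refine ((l1OuterProduct 𝕜 α).norm_image_sub_le_of_bound' zero_le_one hbound p q).trans ?_
  rw [one_mul]
  gcongr with i
  rw [Fintype.prod_eq_mul_prod_compl i, if_pos rfl]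
  refine mul_le_of_le_one_right (norm_nonneg _) (prod_le_one (fun j _ => ?_) fun j hj => ?_)
  · split_ifs <;> positivity
  · rw [if_neg (by simpa using hj)]
    exact max_le (hp j) (hq j)

theorem sum_norm_prod_sub_prod_le {p q : ∀ i, α i → 𝕜}
    (hp : ∀ i, ∑ b, ‖p i b‖ ≤ 1) (hq : ∀ i, ∑ b, ‖q i b‖ ≤ 1) :
    ∑ a : (∀ i, α i), ‖∏ i, p i (a i) - ∏ i, q i (a i)‖ ≤ ∑ i, ∑ b, ‖p i b - q i b‖ := by
  simpa [PiLp.norm_eq_of_L1, l1OuterProduct_apply] using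
    norm_l1OuterProduct_sub_le (p := fun i => WithLp.toLp 1 (p i))
      (q := fun i => WithLp.toLp 1 (q i))
      (by simpa [PiLp.norm_eq_of_L1] using hp) (by simpa [PiLp.norm_eq_of_L1] using hq)

end OuterProduct

open scoped Matrix Matrix.Norms.Operator

theorem linfty_opNorm_le_iff {m n R : Type*} [Fintype m] [Fintype n] [SeminormedAddCommGroup R]
    {M : Matrix m n R} {c : ℝ} (hc : 0 ≤ c) : ‖M‖ ≤ c ↔ ∀ i, ∑ j, ‖M i j‖ ≤ c := by
  lift c to NNReal using hc
  rw [Matrix.linfty_opNorm_def, NNReal.coe_le_coe, Finset.sup_le_iff]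
  simp [← NNReal.coe_le_coe]

section DiscountedValue

variable {ι : Type*} [Fintype ι] [DecidableEq ι] {γ : ℝ} {P P₁ P₂ : Matrix ι ι ℝ}

/-- The value `(1 - γ P)⁻¹ r` of a Markov reward process with transition matrix `P` and expected
rewards `r`, that is, the solution `v` of the Bellman equation `v = r + γ P v`; it is the junk
value `0` when `1 - γ P` is singular. -/
noncomputable def discountedValue (γ : ℝ) (P : Matrix ι ι ℝ) (r : ι → ℝ) : ι → ℝ :=
  (1 - γ • P)⁻¹ *ᵥ r

theorem isUnit_one_sub_smul (hγ₀ : 0 ≤ γ) (hγ₁ : γ < 1) (hP : ‖P‖ ≤ 1) : IsUnit (1 - γ • P) := by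
  refine isUnit_one_sub_of_norm_lt_one ?_
  calc ‖γ • P‖ = γ * ‖P‖ := norm_smul_of_nonneg hγ₀ P
    _ ≤ γ := mul_le_of_le_one_right hγ₀ hP
    _ < 1 := hγ₁

theorem discountedValue_eq_iff (hγ₀ : 0 ≤ γ) (hγ₁ : γ < 1) (hP : ‖P‖ ≤ 1) {r v : ι → ℝ} :
    discountedValue γ P r = v ↔ v = r + γ • P *ᵥ v := by
  have := (isUnit_one_sub_smul hγ₀ hγ₁ hP).invertible
  have hbellman : v = r + γ • P *ᵥ v ↔ r = (1 - γ • P) *ᵥ v := by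
    rw [Matrix.sub_mulVec, Matrix.one_mulVec, Matrix.smul_mulVec, eq_sub_iff_add_eq, eq_comm]
  rw [hbellman]
  refine ⟨fun h => ?_, Matrix.inv_mulVec_eq_vec⟩
  rw [← h, discountedValue, Matrix.mulVec_mulVec, Matrix.mul_inv_of_invertible, Matrix.one_mulVec]

theorem norm_discountedValue_le (hγ₀ : 0 ≤ γ) (hγ₁ : γ < 1) (hP : ‖P‖ ≤ 1) (r : ι → ℝ) :
    ‖discountedValue γ P r‖ ≤ ‖r‖ / (1 - γ) := by
  set v := discountedValue γ P r
  have hv : v = r + γ • P *ᵥ v := (discountedValue_eq_iff hγ₀ hγ₁ hP).1 rfl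
  have hcontr : ‖v‖ ≤ ‖r‖ + γ * ‖v‖ :=
    calc ‖v‖ = ‖r + γ • P *ᵥ v‖ := congrArg norm hv
      _ ≤ ‖r‖ + γ * ‖P *ᵥ v‖ := (norm_add_le _ _).trans_eq (by rw [norm_smul_of_nonneg hγ₀])
      _ ≤ ‖r‖ + γ * ‖v‖ := by
          gcongr
          exact (Matrix.linfty_opNorm_mulVec P v).trans
            (mul_le_of_le_one_left (norm_nonneg v) hP)
  rw [le_div_iff₀ (sub_pos.2 hγ₁)]
  linarith

theorem discountedValue_sub (hγ₀ : 0 ≤ γ) (hγ₁ : γ < 1) (hP₁ : ‖P₁‖ ≤ 1) (hP₂ : ‖P₂‖ ≤ 1)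
    (r₁ r₂ : ι → ℝ) :
    discountedValue γ P₁ r₁ - discountedValue γ P₂ r₂ =
      discountedValue γ P₁ (r₁ - r₂ + γ • (P₁ - P₂) *ᵥ discountedValue γ P₂ r₂) := by
  set v₁ := discountedValue γ P₁ r₁
  set v₂ := discountedValue γ P₂ r₂
  have hv₁ : v₁ = r₁ + γ • P₁ *ᵥ v₁ := (discountedValue_eq_iff hγ₀ hγ₁ hP₁).1 rfl
  have hv₂ : v₂ = r₂ + γ • P₂ *ᵥ v₂ := (discountedValue_eq_iff hγ₀ hγ₁ hP₂).1 rfl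
  symm
  rw [discountedValue_eq_iff hγ₀ hγ₁ hP₁, Matrix.sub_mulVec, Matrix.mulVec_sub]
  linear_combination (norm := module) hv₁ - hv₂

theorem norm_discountedValue_sub_le (hγ₀ : 0 ≤ γ) (hγ₁ : γ < 1) (hP₁ : ‖P₁‖ ≤ 1)
    (hP₂ : ‖P₂‖ ≤ 1) (r₁ r₂ : ι → ℝ) :
    ‖discountedValue γ P₁ r₁ - discountedValue γ P₂ r₂‖ ≤
      (‖r₁ - r₂‖ + γ * (‖P₁ - P₂‖ * (‖r₂‖ / (1 - γ)))) / (1 - γ) := by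
  have : 0 ≤ 1 - γ := sub_nonneg.2 hγ₁.le
  rw [discountedValue_sub hγ₀ hγ₁ hP₁ hP₂]
  refine (norm_discountedValue_le hγ₀ hγ₁ hP₁ _).trans ?_
  gcongr
  refine (norm_add_le _ _).trans ?_
  rw [norm_smul_of_nonneg hγ₀]
  gcongr
  refine (Matrix.linfty_opNorm_mulVec _ _).trans ?_
  gcongr
  exact norm_discountedValue_le hγ₀ hγ₁ hP₂ r₂

end DiscountedValue

namespace SG

variable {n S : ℕ} {A : Fin n → ℕ} {π π₁ π₂ : Profile n S A}

theorem IsProfile.sum_norm_eq_one (hπ : IsProfile π) (i : Fin n) (s : Fin S) :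
    ∑ b, ‖π i s b‖ = 1 := by
  simp only [Real.norm_of_nonneg (hπ.1 i s _), hπ.2 i s]

theorem IsProfile.nonempty_jointAction (hπ : IsProfile π) (s : Fin S) :
    Nonempty (∀ i, Fin (A i)) := by
  refine Classical.nonempty_pi.2 fun i => ?_
  by_contra hempty
  rw [not_nonempty_iff] at hempty
  simpa using hπ.2 i s

theorem Rmax_nonneg (g : SG n S A) (hπ : IsProfile π) (i : Fin n) (s : Fin S) : 0 ≤ g.Rmax := by
  obtain ⟨a⟩ := hπ.nonempty_jointAction s
  exact (g.r_nonneg i s a).trans (g.r_le_Rmax i s a)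

theorem sum_norm_jointProb (hπ : IsProfile π) (s : Fin S) : ∑ a, ‖jointProb π s a‖ = 1 := by
  simp only [jointProb, norm_prod, ← Fintype.prod_sum fun i b => ‖π i s b‖, hπ.sum_norm_eq_one,
    prod_const_one]

theorem sum_norm_jointProb_sub_le (h₁ : IsProfile π₁) (h₂ : IsProfile π₂) (s : Fin S) :
    ∑ a, ‖jointProb π₁ s a - jointProb π₂ s a‖ ≤ ∑ i, ∑ b, ‖π₁ i s b - π₂ i s b‖ :=
  sum_norm_prod_sub_prod_le (fun i => (h₁.sum_norm_eq_one i s).le)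
    fun i => (h₂.sum_norm_eq_one i s).le

/-- The matrix `Π` whose row `s` is the joint action distribution of `π` at `s`. Its columns are
state-action pairs, and the entries at pairs with another state vanish, so that `P^π = Π P` and
`r^{i,π} = Π r^i`. -/
def policyMatrix (π : Profile n S A) : Matrix (Fin S) (Fin S × ∀ i, Fin (A i)) ℝ :=
  .of fun s x => if x.1 = s then jointProb π s x.2 else 0

/-- The transition kernel `P` as a matrix from state-action pairs to states. -/
def transitionMatrix (g : SG n S A) : Matrix (Fin S × ∀ i, Fin (A i)) (Fin S) ℝ :=
  .of fun x s' => g.P x.1 x.2 s'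

/-- The reward function of agent `i` as a vector indexed by state-action pairs. -/
def rewardVector (g : SG n S A) (i : Fin n) : Fin S × (∀ i, Fin (A i)) → ℝ :=
  fun x => g.r i x.1 x.2

theorem Pmat_eq_policyMatrix_mul (g : SG n S A) (π : Profile n S A) :
    g.Pmat π = policyMatrix π * g.transitionMatrix := by
  ext s s'
  simp [Pmat, policyMatrix, transitionMatrix, Matrix.mul_apply, Fintype.sum_prod_type_right]

theorem rvec_eq_policyMatrix_mulVec (g : SG n S A) (π : Profile n S A) (i : Fin n) :
    g.rvec π i = policyMatrix π *ᵥ g.rewardVector i := by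
  ext s
  simp [rvec, policyMatrix, rewardVector, Matrix.mulVec, dotProduct, Fintype.sum_prod_type_right]

theorem norm_policyMatrix_le_one (hπ : IsProfile π) : ‖policyMatrix π‖ ≤ 1 := by
  refine (linfty_opNorm_le_iff zero_le_one).2 fun s => Eq.le ?_
  simpa [policyMatrix, Fintype.sum_prod_type_right, apply_ite norm] using sum_norm_jointProb hπ s

theorem norm_policyMatrix_sub_le (h₁ : IsProfile π₁) (h₂ : IsProfile π₂) {ε : ℝ} (hε₀ : 0 ≤ ε)
    (hε : ∀ s, ∑ i, ∑ b, ‖π₁ i s b - π₂ i s b‖ ≤ ε) :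
    ‖policyMatrix π₁ - policyMatrix π₂‖ ≤ ε := by
  refine (linfty_opNorm_le_iff hε₀).2 fun s => ?_
  refine le_trans (Eq.le ?_) ((sum_norm_jointProb_sub_le h₁ h₂ s).trans (hε s))
  simp [policyMatrix, Fintype.sum_prod_type_right, ite_sub_ite, apply_ite norm]

theorem norm_transitionMatrix_le_one (g : SG n S A) : ‖g.transitionMatrix‖ ≤ 1 := by
  refine (linfty_opNorm_le_iff zero_le_one).2 fun x => ?_
  simp only [transitionMatrix, Matrix.of_apply, Real.norm_of_nonneg (g.P_nonneg _ _ _),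
    g.P_sum_one, le_refl]

theorem norm_rewardVector_le (g : SG n S A) (hR : 0 ≤ g.Rmax) (i : Fin n) :
    ‖g.rewardVector i‖ ≤ g.Rmax :=
  (pi_norm_le_iff_of_nonneg hR).2 fun x =>
    (Real.norm_of_nonneg (g.r_nonneg i x.1 x.2)).trans_le (g.r_le_Rmax i x.1 x.2)

theorem norm_Pmat_le_one (g : SG n S A) (hπ : IsProfile π) : ‖g.Pmat π‖ ≤ 1 := by
  rw [Pmat_eq_policyMatrix_mul]
  exact (Matrix.linfty_opNorm_mul _ _).trans
    (mul_le_one₀ (norm_policyMatrix_le_one hπ) (norm_nonneg _) g.norm_transitionMatrix_le_one)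

theorem norm_rvec_le (g : SG n S A) (hR : 0 ≤ g.Rmax) (hπ : IsProfile π) (i : Fin n) :
    ‖g.rvec π i‖ ≤ g.Rmax := by
  rw [rvec_eq_policyMatrix_mulVec]
  exact (Matrix.linfty_opNorm_mulVec _ _).trans
    ((mul_le_of_le_one_left (norm_nonneg _) (norm_policyMatrix_le_one hπ)).trans
      (g.norm_rewardVector_le hR i))

theorem norm_Pmat_sub_le (g : SG n S A) (π₁ π₂ : Profile n S A) :
    ‖g.Pmat π₁ - g.Pmat π₂‖ ≤ ‖policyMatrix π₁ - policyMatrix π₂‖ := by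
  rw [Pmat_eq_policyMatrix_mul, Pmat_eq_policyMatrix_mul, ← Matrix.sub_mul]
  exact (Matrix.linfty_opNorm_mul _ _).trans
    (mul_le_of_le_one_right (norm_nonneg _) g.norm_transitionMatrix_le_one)

theorem norm_rvec_sub_le (g : SG n S A) (hR : 0 ≤ g.Rmax) (π₁ π₂ : Profile n S A) (i : Fin n) :
    ‖g.rvec π₁ i - g.rvec π₂ i‖ ≤ ‖policyMatrix π₁ - policyMatrix π₂‖ * g.Rmax := by
  rw [rvec_eq_policyMatrix_mulVec, rvec_eq_policyMatrix_mulVec, ← Matrix.sub_mulVec]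
  refine (Matrix.linfty_opNorm_mulVec _ _).trans ?_
  gcongr
  exact g.norm_rewardVector_le hR i

theorem norm_V_sub_le (g : SG n S A) (hR : 0 ≤ g.Rmax) (h₁ : IsProfile π₁) (h₂ : IsProfile π₂)
    (i : Fin n) :
    ‖g.V π₁ i - g.V π₂ i‖ ≤
      g.Rmax * ‖policyMatrix π₁ - policyMatrix π₂‖ / (1 - g.γ) ^ 2 := by
  have hγ : 0 < 1 - g.γ := sub_pos.2 g.γ_lt_one
  set d := ‖policyMatrix π₁ - policyMatrix π₂‖
  calc ‖g.V π₁ i - g.V π₂ i‖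
      ≤ (‖g.rvec π₁ i - g.rvec π₂ i‖ +
          g.γ * (‖g.Pmat π₁ - g.Pmat π₂‖ * (‖g.rvec π₂ i‖ / (1 - g.γ)))) / (1 - g.γ) :=
        norm_discountedValue_sub_le g.γ_nonneg g.γ_lt_one (g.norm_Pmat_le_one h₁)
          (g.norm_Pmat_le_one h₂) _ _
    _ ≤ (d * g.Rmax + g.γ * (d * (g.Rmax / (1 - g.γ)))) / (1 - g.γ) := by
        have := g.γ_nonneg
        gcongr
        exacts [g.norm_rvec_sub_le hR π₁ π₂ i, g.norm_Pmat_sub_le π₁ π₂, g.norm_rvec_le hR h₂ i]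
    _ = g.Rmax * d / (1 - g.γ) ^ 2 := by
        field_simp
        ring

theorem sum_sum_abs_sub_le {δ : ℝ} (hδ₀ : 0 ≤ δ) (hδ : ∀ i s a, |π₁ i s a - π₂ i s a| ≤ δ)
    (s : Fin S) : ∑ i, ∑ b, |π₁ i s b - π₂ i s b| ≤ n * (Amax A * δ) := by
  have hagent : ∀ i, ∑ b, |π₁ i s b - π₂ i s b| ≤ Amax A * δ := fun i =>
    calc ∑ b, |π₁ i s b - π₂ i s b| ≤ A i * δ := by
          simpa using sum_le_card_nsmul univ _ δ fun b _ => hδ i s b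
      _ ≤ Amax A * δ := by
          gcongr
          exact le_sup (f := A) (mem_univ i)
  simpa using sum_le_card_nsmul univ _ _ fun i _ => hagent i

end SG

open SG in
theorem abs_V_diff_le_general {n S : ℕ} {A : Fin n → ℕ} (g : SG n S A) {π₁ π₂ : Profile n S A}
    (h₁ : IsProfile π₁) (h₂ : IsProfile π₂) {ε : ℝ}
    (hε : ∀ s, ∑ i, ∑ b, |π₁ i s b - π₂ i s b| ≤ ε) (i : Fin n) (s : Fin S) :
    |g.V π₁ i s - g.V π₂ i s| ≤ g.Rmax * ε / (1 - g.γ) ^ 2 := by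
  have hR : 0 ≤ g.Rmax := g.Rmax_nonneg h₁ i s
  have hε₀ : 0 ≤ ε := le_trans (by positivity) (hε s)
  calc |g.V π₁ i s - g.V π₂ i s| ≤ ‖g.V π₁ i - g.V π₂ i‖ := norm_le_pi_norm (g.V π₁ i - g.V π₂ i) s
    _ ≤ g.Rmax * ‖policyMatrix π₁ - policyMatrix π₂‖ / (1 - g.γ) ^ 2 := g.norm_V_sub_le hR h₁ h₂ i
    _ ≤ g.Rmax * ε / (1 - g.γ) ^ 2 := by
        gcongr
        exact norm_policyMatrix_sub_le h₁ h₂ hε₀ hε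

open SG in
/-- `|V^{π₁^i,π₁^{-i}}(s) − V^{π₂^i,π₂^{-i}}(s)| ≤ 2nS²A_max R_max δ/(1−γ)²`. -/
theorem abs_V_diff_le {n S : ℕ} {A : Fin n → ℕ} (g : SG n S A)
    (π₁ π₂ : Profile n S A) (h₁ : IsProfile π₁) (h₂ : IsProfile π₂)
    (δ : ℝ) (hδ : ∀ i s a, |π₁ i s a - π₂ i s a| ≤ δ) :
    ∀ (i : Fin n) (s : Fin S),
      |g.V π₁ i s - g.V π₂ i s| ≤
        2 * (n : ℝ) * (S : ℝ) ^ 2 * (Amax A : ℝ) * g.Rmax * δ / (1 - g.γ) ^ 2 := by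
  intro i s
  obtain ⟨a⟩ := h₁.nonempty_jointAction s
  have hR : 0 ≤ g.Rmax := g.Rmax_nonneg h₁ i s
  have hδ₀ : 0 ≤ δ := (abs_nonneg _).trans (hδ i s (a i))
  have hS : (1 : ℝ) ≤ 2 * S ^ 2 := by
    have : (1 : ℝ) ≤ S := mod_cast s.pos
    nlinarith
  calc |g.V π₁ i s - g.V π₂ i s|
      ≤ g.Rmax * (n * (Amax A * δ)) / (1 - g.γ) ^ 2 :=
        abs_V_diff_le_general g h₁ h₂ (sum_sum_abs_sub_le hδ₀ hδ) i s
    _ ≤ 2 * S ^ 2 * (g.Rmax * (n * (Amax A * δ)) / (1 - g.γ) ^ 2) :=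
        le_mul_of_one_le_left (by positivity) hS
    _ = 2 * n * S ^ 2 * Amax A * g.Rmax * δ / (1 - g.γ) ^ 2 := by ring
end

section
/- Let ε > 0 and let π be a strategy profile of a finite discounted stochastic game with ‖f(π) − π‖∞ ≤ ε. Then for every agent i, state s, and action a^i, writing D_{a^i}(s) = max(0, V^{π^i,π^{-i}}_{π^i(s,a^i)=1}(s) − V^{π^i,π^{-i}}(s)), one has π^i(s,a^i)·∑_{b^i∈𝔸^i} D_{b^i}(s) ≤ D_{a^i}(s) + ε·(1 + A_max R_max/(1−γ)). -/
/-!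
Clearing the denominator of `f` in `π(s,a) - ε ≤ f(π)(s,a)` gives
`π(s,a) · ∑ D ≤ D_a + ε (1 + ∑ D)`, so it remains to bound `∑ D`. Each `D_b` is at most a difference
of two values, and values lie in `[0, R_max / (1 - γ)]`: by a maximum principle for a stochastic
matrix `M`, bounds on `(1 - γ M) x` give bounds on `x`. Applied to the homogeneous equation, the
same principle shows that `1 - γ M` is invertible.
-/

open Finset

section StochasticMatrix

open Matrix

variable {𝕜 ι : Type*} [Field 𝕜] [LinearOrder 𝕜] [IsStrictOrderedRing 𝕜]
  [Fintype ι] [DecidableEq ι] {M : Matrix ι ι 𝕜} {γ : 𝕜}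

theorem mulVec_apply_mem_of_mem_rowStochastic (hM : M ∈ rowStochastic 𝕜 ι) {x : ι → 𝕜}
    {K : Set 𝕜} (hK : Convex 𝕜 K) (hx : ∀ j, x j ∈ K) (i : ι) : (M *ᵥ x) i ∈ K :=
  hK.sum_mem (fun _ _ => nonneg_of_mem_rowStochastic hM) (sum_row_of_mem_rowStochastic hM i)
    fun j _ => hx j

theorem le_div_of_one_sub_smul_mulVec_le (hM : M ∈ rowStochastic 𝕜 ι) (hγ : γ ∈ Set.Ico 0 1)
    {x : ι → 𝕜} {c : 𝕜} (h : ∀ i, ((1 - γ • M) *ᵥ x) i ≤ c) (i : ι) : x i ≤ c / (1 - γ) := by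
  obtain ⟨m, -, hmax⟩ := exists_max_image univ x ⟨i, mem_univ i⟩
  have havg : (M *ᵥ x) m ≤ x m :=
    mulVec_apply_mem_of_mem_rowStochastic hM (convex_Iic (x m)) (fun j => hmax j (mem_univ j)) m
  have hm : x m - γ * (M *ᵥ x) m ≤ c := by
    simpa only [sub_mulVec, one_mulVec, smul_mulVec, Pi.sub_apply, Pi.smul_apply, smul_eq_mul]
      using h m
  refine (hmax i (mem_univ i)).trans ((le_div_iff₀ (sub_pos.2 hγ.2)).2 ?_)
  linarith [mul_le_mul_of_nonneg_left havg hγ.1]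

theorem mem_Icc_div_of_one_sub_smul_mulVec_mem_Icc (hM : M ∈ rowStochastic 𝕜 ι)
    (hγ : γ ∈ Set.Ico 0 1) {x : ι → 𝕜} {a b : 𝕜}
    (h : ∀ i, ((1 - γ • M) *ᵥ x) i ∈ Set.Icc a b) (i : ι) :
    x i ∈ Set.Icc (a / (1 - γ)) (b / (1 - γ)) := by
  have hneg : (-x) i ≤ -a / (1 - γ) :=
    le_div_of_one_sub_smul_mulVec_le hM hγ
      (fun j => by simpa only [mulVec_neg, Pi.neg_apply, neg_le_neg_iff] using (h j).1) i
  rw [neg_div, Pi.neg_apply, neg_le_neg_iff] at hneg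
  exact ⟨hneg, le_div_of_one_sub_smul_mulVec_le hM hγ (fun j => (h j).2) i⟩

theorem isUnit_one_sub_smul_of_mem_rowStochastic (hM : M ∈ rowStochastic 𝕜 ι)
    (hγ : γ ∈ Set.Ico 0 1) : IsUnit (1 - γ • M) := by
  rw [← mulVec_injective_iff_isUnit, ← coe_mulVecLin, injective_iff_map_eq_zero]
  intro x hx
  ext i
  simpa using mem_Icc_div_of_one_sub_smul_mulVec_mem_Icc hM hγ (a := 0) (b := 0)
    (fun j => ⟨(congrFun hx j).ge, (congrFun hx j).le⟩) i

theorem inv_one_sub_smul_mulVec_mem_Icc (hM : M ∈ rowStochastic 𝕜 ι) (hγ : γ ∈ Set.Ico 0 1)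
    {y : ι → 𝕜} {a b : 𝕜} (hy : ∀ i, y i ∈ Set.Icc a b) (i : ι) :
    ((1 - γ • M)⁻¹ *ᵥ y) i ∈ Set.Icc (a / (1 - γ)) (b / (1 - γ)) := by
  have hdet := (isUnit_iff_isUnit_det _).1 (isUnit_one_sub_smul_of_mem_rowStochastic hM hγ)
  refine mem_Icc_div_of_one_sub_smul_mulVec_mem_Icc hM hγ (fun j => ?_) i
  rw [mulVec_mulVec, mul_nonsing_inv _ hdet, one_mulVec]
  exact hy j

end StochasticMatrix

theorem prod_apply_mem_stdSimplex {𝕜 ι : Type*} [CommSemiring 𝕜] [PartialOrder 𝕜]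
    [IsOrderedRing 𝕜] [Fintype ι] [DecidableEq ι] {α : ι → Type*} [∀ i, Fintype (α i)]
    {p : ∀ i, α i → 𝕜} (hp : ∀ i, p i ∈ stdSimplex 𝕜 (α i)) :
    (fun a => ∏ i, p i (a i)) ∈ stdSimplex 𝕜 (∀ i, α i) := by
  refine ⟨fun a => prod_nonneg fun i _ => (hp i).1 (a i), ?_⟩
  rw [← Fintype.prod_sum]
  exact prod_eq_one fun i _ => (hp i).2

namespace SG

variable {n S : ℕ} {A : Fin n → ℕ} (g : SG n S A) {π : Profile n S A}

theorem isProfile_iff_forall_mem_stdSimplex :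
    IsProfile π ↔ ∀ i s, π i s ∈ stdSimplex ℝ (Fin (A i)) :=
  ⟨fun h i s => ⟨h.1 i s, h.2 i s⟩, fun h => ⟨fun i s => (h i s).1, fun i s => (h i s).2⟩⟩

theorem IsProfile.update (hπ : IsProfile π) {i : Fin n} {σ : Fin S → Fin (A i) → ℝ}
    (hσ : ∀ s, σ s ∈ stdSimplex ℝ (Fin (A i))) : IsProfile (Function.update π i σ) := by
  rw [isProfile_iff_forall_mem_stdSimplex] at hπ ⊢
  exact (Function.forall_update_iff π fun j τ => ∀ s, τ s ∈ stdSimplex ℝ (Fin (A j))).2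
    ⟨hσ, fun j _ => hπ j⟩

theorem IsProfile.devProfile (hπ : IsProfile π) (i : Fin n) (s : Fin S) (a : Fin (A i)) :
    IsProfile (devProfile π i s a) := by
  refine hπ.update fun t => ?_
  by_cases ht : t = s
  · simpa only [ht, if_true, eq_comm] using ite_eq_mem_stdSimplex ℝ a
  · simpa only [ht, if_false] using isProfile_iff_forall_mem_stdSimplex.1 hπ i t

theorem jointProb_mem_stdSimplex (hπ : IsProfile π) (s : Fin S) :
    jointProb π s ∈ stdSimplex ℝ (∀ i, Fin (A i)) :=
  prod_apply_mem_stdSimplex fun i => isProfile_iff_forall_mem_stdSimplex.1 hπ i s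

theorem sum_jointProb_smul_mem {E : Type*} [AddCommGroup E] [Module ℝ E] {K : Set E}
    (hK : Convex ℝ K) (hπ : IsProfile π) (s : Fin S) {z : (∀ i, Fin (A i)) → E}
    (hz : ∀ a, z a ∈ K) : ∑ a, jointProb π s a • z a ∈ K :=
  have hp := jointProb_mem_stdSimplex hπ s
  hK.sum_mem (fun a _ => hp.1 a) hp.2 fun a _ => hz a

theorem Pmat_mem_rowStochastic (hπ : IsProfile π) :
    g.Pmat π ∈ Matrix.rowStochastic ℝ (Fin S) := by
  have hrow (s : Fin S) : g.Pmat π s ∈ stdSimplex ℝ (Fin S) := by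
    convert sum_jointProb_smul_mem (convex_stdSimplex ℝ (Fin S)) hπ s
      (z := g.P s) (fun a => ⟨g.P_nonneg s a, g.P_sum_one s a⟩)
    ext s'
    simp [Pmat]
  exact Matrix.mem_rowStochastic_iff_sum.2 ⟨fun s => (hrow s).1, fun s => (hrow s).2⟩

theorem rvec_mem_Icc (hπ : IsProfile π) (i : Fin n) (s : Fin S) :
    g.rvec π i s ∈ Set.Icc 0 g.Rmax :=
  sum_jointProb_smul_mem (convex_Icc 0 g.Rmax) hπ s
    fun a => ⟨g.r_nonneg i s a, g.r_le_Rmax i s a⟩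

theorem V_mem_Icc (hπ : IsProfile π) (i : Fin n) (s : Fin S) :
    g.V π i s ∈ Set.Icc 0 (g.Rmax / (1 - g.γ)) := by
  rw [V, ← zero_div (1 - g.γ)]
  exact inv_one_sub_smul_mulVec_mem_Icc (g.Pmat_mem_rowStochastic hπ)
    ⟨g.γ_nonneg, g.γ_lt_one⟩ (g.rvec_mem_Icc hπ i) s

theorem D_nonneg (π : Profile n S A) (i : Fin n) (s : Fin S) (a : Fin (A i)) :
    0 ≤ g.D π i s a :=
  le_max_left _ _

theorem D_le (hπ : IsProfile π) (i : Fin n) (s : Fin S) (a : Fin (A i)) :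
    g.D π i s a ≤ g.Rmax / (1 - g.γ) := by
  have hV := g.V_mem_Icc hπ i s
  have hVdev : g.Vdev π i s a ≤ g.Rmax / (1 - g.γ) := (g.V_mem_Icc (hπ.devProfile i s a) i s).2
  exact max_le (hV.1.trans hV.2) ((sub_le_self _ hV.1).trans hVdev)

theorem sum_D_le (hπ : IsProfile π) (i : Fin n) (s : Fin S) :
    ∑ b, g.D π i s b ≤ A i * g.Rmax / (1 - g.γ) := by
  simpa [mul_div_assoc] using sum_le_card_nsmul univ (g.D π i s) _ fun b _ => g.D_le hπ i s b

theorem mul_sum_D_le_of_sub_f_le {ε : ℝ} {i : Fin n} {s : Fin S} {a : Fin (A i)}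
    (h : π i s a - g.f π i s a ≤ ε) :
    π i s a * ∑ b, g.D π i s b ≤ g.D π i s a + ε * (1 + ∑ b, g.D π i s b) := by
  have hpos : 0 < 1 + ∑ b, g.D π i s b :=
    add_pos_of_pos_of_nonneg one_pos (sum_nonneg fun b _ => g.D_nonneg π i s b)
  have hf : π i s a - ε ≤ (π i s a + g.D π i s a) / (1 + ∑ b, g.D π i s b) := sub_le_comm.1 h
  rw [le_div_iff₀ hpos] at hf
  linarith

theorem mul_Rmax_div_le_Amax_mul_Rmax_div (hπ : IsProfile π) (i : Fin n) (s : Fin S) :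
    A i * g.Rmax / (1 - g.γ) ≤ Amax A * g.Rmax / (1 - g.γ) := by
  have hR : 0 ≤ g.Rmax := (g.rvec_mem_Icc hπ i s).1.trans (g.rvec_mem_Icc hπ i s).2
  have hγ : 0 ≤ 1 - g.γ := sub_nonneg.2 g.γ_lt_one.le
  have hA : A i ≤ Amax A := le_sup (mem_univ i)
  gcongr

end SG

open SG in
theorem crucial_inequality_general {n S : ℕ} {A : Fin n → ℕ} (g : SG n S A)
    {π : Profile n S A} (hπ : IsProfile π) {ε : ℝ} (hε : 0 ≤ ε) {i : Fin n} {s : Fin S}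
    {a : Fin (A i)} (h : π i s a - g.f π i s a ≤ ε) :
    π i s a * ∑ b, g.D π i s b ≤ g.D π i s a + ε * (1 + A i * g.Rmax / (1 - g.γ)) :=
  calc π i s a * ∑ b, g.D π i s b
      ≤ g.D π i s a + ε * (1 + ∑ b, g.D π i s b) := g.mul_sum_D_le_of_sub_f_le h
    _ ≤ g.D π i s a + ε * (1 + A i * g.Rmax / (1 - g.γ)) := by gcongr; exact g.sum_D_le hπ i s

open SG in
/-- the crucial inequality for approximate fixed points of `f`. -/
theorem crucial_inequality {n S : ℕ} {A : Fin n → ℕ} (g : SG n S A)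
    (π : Profile n S A) (hπ : IsProfile π)
    (ε : ℝ) (hε : 0 < ε) (hfix : ∀ i s a, |g.f π i s a - π i s a| ≤ ε) :
    ∀ (i : Fin n) (s : Fin S) (a : Fin (A i)),
      π i s a * ∑ b, g.D π i s b ≤
        g.D π i s a + ε * (1 + (Amax A : ℝ) * g.Rmax / (1 - g.γ)) := by
  intro i s a
  grw [← g.mul_Rmax_div_le_Amax_mul_Rmax_div hπ i s]
  exact crucial_inequality_general g hπ hε.le (abs_sub_le_iff.1 (hfix i s a)).2
end
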